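/- arXiv:1812.04781 — 3 statements merged into one kernel-verified Lean document; each statement's English description precedes it below -/
import Mathlib

section
/- For every m ≥ 1 and every n ≥ 1 there exist mn homogeneous polynomials f_1, f_2, …, f_{mn} in the invariant ring 𝔽_q[mW]^{GL_n(𝔽_q)} such that the invariant field 𝔽_q(mW)^{GL_n(𝔽_q)} is generated by them: 𝔽_q(mW)^{GL_n(𝔽_q)} = 𝔽_q(f_1, f_2, …, f_{mn}). -/
open MvPolynomial Matrix

set_option maxHeartbeats 1000000
set_option synthInstance.maxHeartbeats 400000

noncomputable section

/-- The polynomial ring `𝔽_q[mW]` in the variables `x_{ij}`, `1 ≤ i ≤ m`, `1 ≤ j ≤ n`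
(indexed here by `(i, j) : Fin m × Fin n`). -/
abbrev PolyMW (F : Type) [Field F] (m n : ℕ) : Type := MvPolynomial (Fin m × Fin n) F

/-- The rational function field `𝔽_q(mW)`. -/
abbrev RatMW (F : Type) [Field F] (m n : ℕ) : Type := FractionRing (PolyMW F m n)

/-- The substitution endomorphism of `𝔽_q[mW]` induced by a matrix `σ`: it transforms each
column vector `X_i = ᵗ(x_{i1},…,x_{in})` by the standard action, `X_i ↦ σ • X_i`. -/
def matSub {F : Type} [Field F] {m n : ℕ} (σ : Matrix (Fin n) (Fin n) F) :
    PolyMW F m n →ₐ[F] PolyMW F m n :=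
  aeval fun v => ∑ l, C (σ v.2 l) * X (v.1, l)

lemma matSub_comp {F : Type} [Field F] {m n : ℕ} (A B : Matrix (Fin n) (Fin n) F) :
    (matSub (F := F) (m := m) (n := n) A).comp (matSub B) = matSub (B * A) := by
  apply MvPolynomial.algHom_ext
  rintro ⟨i, j⟩
  simp only [AlgHom.coe_comp, Function.comp_apply, matSub, aeval_X, map_sum, _root_.map_mul,
    aeval_C, MvPolynomial.algebraMap_eq, Finset.mul_sum]
  rw [Finset.sum_comm]
  refine Finset.sum_congr rfl fun s _ => ?_
  calc ∑ l, C (B j l) * (C (A l s) * X (i, s))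
      = (∑ l, C (B j l * A l s)) * X (i, s) := by
        rw [Finset.sum_mul]
        simp [C_mul, mul_assoc]
    _ = C ((B * A) j s) * X (i, s) := by
        rw [Matrix.mul_apply, map_sum]

lemma matSub_one {F : Type} [Field F] {m n : ℕ} :
    matSub (F := F) (m := m) (n := n) (1 : Matrix (Fin n) (Fin n) F) = AlgHom.id F _ := by
  apply MvPolynomial.algHom_ext
  rintro ⟨i, j⟩
  simp [matSub, Matrix.one_apply, ite_mul, apply_ite (C (σ := Fin m × Fin n) (R := F))]

/-- The algebra automorphism of `𝔽_q[mW]` induced by `σ ∈ GL_n(𝔽_q)`. -/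
def matAut {F : Type} [Field F] {m n : ℕ} (σ : GL (Fin n) F) :
    PolyMW F m n ≃ₐ[F] PolyMW F m n :=
  AlgEquiv.ofAlgHom (matSub (σ : Matrix (Fin n) (Fin n) F))
    (matSub ((↑(σ⁻¹) : Matrix (Fin n) (Fin n) F)))
    (by rw [matSub_comp, σ.inv_mul, matSub_one])
    (by rw [matSub_comp, σ.mul_inv, matSub_one])

/-- The automorphism of `𝔽_q(mW)` induced by the action of `σ ∈ GL_n(𝔽_q)` on `𝔽_q[mW]`. -/
def fracAct {F : Type} [Field F] {m n : ℕ} (σ : GL (Fin n) F) :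
    RatMW F m n →+* RatMW F m n :=
  (IsFractionRing.ringEquivOfRingEquiv
    ((matAut (F := F) (m := m) (n := n) σ).toRingEquiv) :
    RatMW F m n ≃+* RatMW F m n).toRingHom

/-- The fixed subfield `𝔽_q(mW)^G` of a subgroup `G ≤ GL_n(𝔽_q)`. -/
def fixedSubfield (F : Type) [Field F] (m n : ℕ) (G : Subgroup (GL (Fin n) F)) :
    Subfield (RatMW F m n) where
  carrier := {a : RatMW F m n | ∀ σ ∈ G, fracAct σ a = a}
  mul_mem' := fun ha hb σ hσ => by
    rw [(fracAct σ).map_mul, ha σ hσ, hb σ hσ]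
  one_mem' := fun σ hσ => (fracAct σ).map_one
  add_mem' := fun ha hb σ hσ => by
    rw [(fracAct σ).map_add, ha σ hσ, hb σ hσ]
  zero_mem' := fun σ hσ => (fracAct σ).map_zero
  neg_mem' := fun ha σ hσ => by rw [(fracAct σ).map_neg, ha σ hσ]
  inv_mem' := fun a ha σ hσ => by rw [map_inv₀ (fracAct σ), ha σ hσ]

/-- `SL_n(𝔽_q)` as the subgroup of `GL_n(𝔽_q)` of matrices of determinant `1`. -/
def SLsub (F : Type) [Field F] (n : ℕ) : Subgroup (GL (Fin n) F) :=
  MonoidHom.ker (Units.map (Matrix.detMonoidHom (n := Fin n) (R := F)))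

/-!
Let `F = 𝔽_q` and let `M` be the Moore matrix of `X_1`, with rows `(x_{1j}, x_{1j}^q, …,
x_{1j}^{q^{n-1}})`. Its determinant is nonzero, and an element `σ` of `GL_n` multiplies `M` and
every `X_i` by `σ` on the left. So the solutions `c`, `b_i` of `M c = X_1^{q^n}` and `M b_i = X_i`,
`i ≥ 2`, are invariant.

Let `E` be a subfield of `K = F(mW)` that contains `F` and their entries. The first system says that
the `x_{1j}` are roots of `T^{q^n} - ∑ c_k T^{q^k}`. This polynomial is additive and `F`-linear, so
its roots are the `q^n` linear combinations of the `x_{1j}`, and by the other systems `K` is its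
splitting field over `E`. An automorphism of `K` over `E` permutes the roots, hence acts on `X_1` by
a matrix of `GL_n`, hence, since the `b_i` are fixed, on every `X_i` by the same matrix. Thus the
Galois group of `K / E` lies in `GL_n`, and by Galois theory an invariant element of `K` belongs to
`E`.

By Cramer's rule the solutions are polynomials divided by `det M`, and `c_0 = ± (det M)^{q-1}`.
Multiplied by this invariant polynomial, the remaining entries become polynomials as well.
-/

section MapMulVec

variable {ι κ R A B : Type*} [Fintype κ]

lemma algHom_comp_map_mulVec [CommSemiring R] [Semiring A] [Semiring B] [Algebra R A] [Algebra R B]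
    (φ : A →ₐ[R] B) (s : Matrix ι κ R) (x : κ → A) :
    φ ∘ (s.map (algebraMap R A) *ᵥ x) = s.map (algebraMap R B) *ᵥ (φ ∘ x) := by
  ext i
  simp [mulVec, dotProduct]

variable [CommSemiring R] [CommSemiring A] [Algebra R A]

lemma linearCombination_apply_eq_dotProduct (x : κ → A) (v : κ → R) :
    Fintype.linearCombination R x v = (algebraMap R A ∘ v) ⬝ᵥ x := by
  simp [Fintype.linearCombination_apply, dotProduct, Algebra.smul_def]

lemma linearCombination_eq_map_mulVec (x : κ → A) :
    ⇑(Fintype.linearCombination R x) =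
      (Matrix.of fun v : κ → R => v).map (algebraMap R A) *ᵥ x :=
  funext (linearCombination_apply_eq_dotProduct x)

lemma linearCombination_map_mulVec [Fintype ι] (s : Matrix ι κ R) (x : κ → A) :
    ⇑(Fintype.linearCombination R (s.map (algebraMap R A) *ᵥ x)) =
      Fintype.linearCombination R x ∘ (· ᵥ* s) := by
  ext v
  rw [Function.comp_apply, linearCombination_apply_eq_dotProduct,
    linearCombination_apply_eq_dotProduct, dotProduct_mulVec]
  congr 1
  exact funext fun j => (RingHom.map_vecMul (algebraMap R A) s v j).symm

lemma isUnit_of_linearIndependent_map_mulVec {F : Type*} [Field F] [DecidableEq κ] [Algebra F A]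
    {s : Matrix κ κ F} {x : κ → A} (hs : LinearIndependent F (s.map (algebraMap F A) *ᵥ x)) :
    IsUnit s := by
  rw [linearIndependent_iff_injective_fintypeLinearCombination, linearCombination_map_mulVec] at hs
  exact vecMul_injective_iff_isUnit.mp hs.of_comp

end MapMulVec

section MooreMatrix

variable {ι κ R S : Type*} {n : ℕ}

/-- The Moore matrix with rows `(x i, x i ^ q, …, x i ^ q ^ (n - 1))`. The rows are indexed by an
arbitrary type, so that a family and all its linear combinations can be treated alike. -/
def mooreMatrix [Monoid R] (q : ℕ) (x : ι → R) : Matrix ι (Fin n) R :=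
  Matrix.of fun i k => x i ^ q ^ (k : ℕ)

lemma mooreMatrix_apply [Monoid R] (q : ℕ) (x : ι → R) (i : ι) (k : Fin n) :
    mooreMatrix q x i k = x i ^ q ^ (k : ℕ) :=
  rfl

lemma map_mooreMatrix [Semiring R] [Semiring S] (φ : R →+* S) (q : ℕ) (x : ι → R) :
    (mooreMatrix q x : Matrix ι (Fin n) R).map φ = mooreMatrix q (φ ∘ x) := by
  ext i k
  simp [mooreMatrix]

lemma map_det_mooreMatrix [CommRing R] [CommRing S] (φ : R →+* S) (q : ℕ) (x : Fin n → R) :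
    φ (mooreMatrix q x).det = (mooreMatrix q (φ ∘ x)).det := by
  rw [RingHom.map_det, RingHom.mapMatrix_apply, map_mooreMatrix]

lemma submatrix_finRotate_updateCol_mooreMatrix [Monoid R] (q : ℕ) (x : ι → R) :
    ((mooreMatrix q x).updateCol 0 (x ^ q ^ (n + 1))).submatrix id (finRotate (n + 1)) =
      mooreMatrix q (x ^ q) := by
  ext i k
  rw [submatrix_apply, mooreMatrix_apply, Pi.pow_apply, ← pow_mul, ← pow_succ', id]
  induction k using Fin.lastCases with
  | last => simp
  | cast k =>
    have hk : finRotate (n + 1) k.castSucc = k.succ := by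
      ext
      simp
    simp [hk, mooreMatrix_apply]

section Frobenius

variable {F A : Type*} [Field F] [Fintype F] [CommRing A] [Algebra F A]

local notation "q" => Fintype.card F

lemma map_mulVec_pow_card_pow [Fintype κ] (s : Matrix ι κ F) (x : κ → A) (k : ℕ) :
    (s.map (algebraMap F A) *ᵥ x) ^ q ^ k = s.map (algebraMap F A) *ᵥ (x ^ q ^ k) := by
  have hfrob : ⇑(FiniteField.frobeniusAlgHom F A ^ k) = (· ^ q ^ k) := by
    rw [AlgHom.coe_pow, FiniteField.coe_frobeniusAlgHom, pow_iterate]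
  have hlin := algHom_comp_map_mulVec (FiniteField.frobeniusAlgHom F A ^ k) s x
  rwa [hfrob] at hlin

lemma mooreMatrix_map_mulVec [Fintype κ] (s : Matrix ι κ F) (x : κ → A) :
    (mooreMatrix q (s.map (algebraMap F A) *ᵥ x) : Matrix ι (Fin n) A) =
      s.map (algebraMap F A) * mooreMatrix q x := by
  ext i k
  exact congrFun (map_mulVec_pow_card_pow s x k) i

lemma mooreMatrix_linearCombination [Fintype κ] (x : κ → A) :
    (mooreMatrix q (Fintype.linearCombination F x) : Matrix (κ → F) (Fin n) A) =
      (Matrix.of fun v : κ → F => v).map (algebraMap F A) * mooreMatrix q x := by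
  rw [linearCombination_eq_map_mulVec, mooreMatrix_map_mulVec]

lemma linearCombination_pow_card_pow [Fintype κ] (x : κ → A) (v : κ → F) (k : ℕ) :
    Fintype.linearCombination F x v ^ q ^ k = Fintype.linearCombination F (x ^ q ^ k) v := by
  simp only [linearCombination_eq_map_mulVec, ← map_mulVec_pow_card_pow, Pi.pow_apply]

lemma algHom_comp_eq_map_mulVec_of_mooreMatrix_mulVec_eq {R : Type*} [CommRing R] [Algebra R A]
    {x y : Fin n → A} {b : Fin n → R} {s : Matrix (Fin n) (Fin n) F} {τ : A →ₐ[R] A}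
    (hτ : τ ∘ x = s.map (algebraMap F A) *ᵥ x)
    (hb : mooreMatrix q x *ᵥ (algebraMap R A ∘ b) = y) :
    τ ∘ y = s.map (algebraMap F A) *ᵥ y := by
  calc τ ∘ y = (mooreMatrix q x).map τ *ᵥ (τ ∘ algebraMap R A ∘ b) := by
        rw [← hb]
        exact funext fun j => RingHom.map_mulVec (τ : A →+* A) _ _ j
    _ = mooreMatrix q (τ ∘ x) *ᵥ (algebraMap R A ∘ b) := by
        congr 1
        · exact map_mooreMatrix (τ : A →+* A) _ x
        · exact funext fun k => τ.commutes (b k)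
    _ = s.map (algebraMap F A) *ᵥ y := by
        rw [hτ, mooreMatrix_map_mulVec, ← mulVec_mulVec, hb]

lemma det_mooreMatrix_map_mulVec (s : Matrix (Fin n) (Fin n) F) (x : Fin n → A) :
    (mooreMatrix q (s.map (algebraMap F A) *ᵥ x)).det =
      algebraMap F A s.det * (mooreMatrix q x).det := by
  rw [mooreMatrix_map_mulVec, det_mul, RingHom.map_det, RingHom.mapMatrix_apply]

lemma det_mooreMatrix_pow_card (x : Fin n → A) :
    (mooreMatrix q (x ^ q)).det = (mooreMatrix q x).det ^ q :=
  (map_det_mooreMatrix (FiniteField.frobeniusAlgHom F A : A →+* A) q x).symm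

-- Rotating the new first column to the last place gives the Moore matrix of `x ^ q`.
lemma cramer_mooreMatrix_zero (x : Fin (n + 1) → A) :
    (mooreMatrix q x).cramer (x ^ q ^ (n + 1)) 0 = (-1) ^ n * (mooreMatrix q x).det ^ q := by
  have h := det_permute' (finRotate (n + 1)) ((mooreMatrix q x).updateCol 0 (x ^ q ^ (n + 1)))
  rw [submatrix_finRotate_updateCol_mooreMatrix, det_mooreMatrix_pow_card, sign_finRotate] at h
  rw [h, cramer_apply, ← mul_assoc]
  simp [← mul_pow]

end Frobenius

end MooreMatrix

section LinearizedPolynomial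

variable {R : Type*} {n : ℕ}

/-- The linearized polynomial `a₀ T + a₁ T ^ q + ⋯ + aₙ₋₁ T ^ q ^ (n - 1)`. -/
def linearizedPolynomial [CommRing R] (q : ℕ) (a : Fin n → R) : Polynomial R :=
  ∑ k, Polynomial.C (a k) * Polynomial.X ^ q ^ (k : ℕ)

lemma eval_linearizedPolynomial [CommRing R] {ι : Type*} (q : ℕ) (a : Fin n → R) (y : ι → R)
    (i : ι) : (linearizedPolynomial q a).eval (y i) = (mooreMatrix q y *ᵥ a) i := by
  simp only [linearizedPolynomial, Polynomial.eval_finsetSum, Polynomial.eval_mul,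
    Polynomial.eval_C, Polynomial.eval_pow, Polynomial.eval_X, mulVec, dotProduct,
    mooreMatrix_apply]
  exact Finset.sum_congr rfl fun k _ => mul_comm _ _

lemma map_linearizedPolynomial [CommRing R] {S : Type*} [CommRing S] (φ : R →+* S) (q : ℕ)
    (a : Fin n → R) : (linearizedPolynomial q a).map φ = linearizedPolynomial q (φ ∘ a) := by
  simp [linearizedPolynomial, Polynomial.map_sum]

lemma aeval_X_pow_sub_linearizedPolynomial [CommRing R] {ι A : Type*} [CommRing A] [Algebra R A]
    {q : ℕ} {x : ι → A} {c : Fin n → R}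
    (hc : mooreMatrix q x *ᵥ (algebraMap R A ∘ c) = x ^ q ^ n) (i : ι) :
    (Polynomial.X ^ q ^ n - linearizedPolynomial q c).aeval (x i) = 0 := by
  rw [map_sub, map_pow, Polynomial.aeval_X, ← Polynomial.eval_map_algebraMap,
    map_linearizedPolynomial, eval_linearizedPolynomial, hc, Pi.pow_apply, sub_self]

lemma degree_linearizedPolynomial_lt [CommRing R] {q : ℕ} (hq : 1 < q) (a : Fin n → R) :
    (linearizedPolynomial q a).degree < (q ^ n : ℕ) := by
  refine (Polynomial.degree_sum_le _ _).trans_lt ?_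
  rw [Finset.sup_lt_iff (WithBot.bot_lt_coe _)]
  intro k _
  refine (Polynomial.degree_C_mul_X_pow_le _ _).trans_lt ?_
  exact_mod_cast Nat.pow_lt_pow_right hq k.2

lemma coeff_linearizedPolynomial [CommRing R] {q : ℕ} (hq : 1 < q) (a : Fin n → R) (k : Fin n) :
    (linearizedPolynomial q a).coeff (q ^ (k : ℕ)) = a k := by
  simp [linearizedPolynomial, Polynomial.coeff_X_pow, Nat.pow_right_inj hq, Fin.val_inj]

variable {F A : Type*} [Field F] [Fintype F] [CommRing A] [IsDomain A] [Algebra F A]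

local notation "q" => Fintype.card F

theorem det_mooreMatrix_ne_zero {x : Fin n → A} (hx : LinearIndependent F x) :
    (mooreMatrix q x).det ≠ 0 := by
  intro hdet
  have hq : 1 < q := Fintype.one_lt_card
  obtain ⟨a, ha, hxa⟩ := exists_mulVec_eq_zero_iff.mpr hdet
  have hzero : linearizedPolynomial q a = 0 := by
    refine Polynomial.eq_zero_of_degree_lt_of_eval_index_eq_zero Finset.univ
      (linearIndependent_iff_injective_fintypeLinearCombination.mp hx).injOn ?_ fun v _ => ?_
    · simpa using degree_linearizedPolynomial_lt hq a
    · rw [eval_linearizedPolynomial, mooreMatrix_linearCombination, ← mulVec_mulVec, hxa,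
        mulVec_zero, Pi.zero_apply]
  refine ha (funext fun k => ?_)
  rw [← coeff_linearizedPolynomial hq a k, hzero, Polynomial.coeff_zero,
    Pi.zero_apply]

lemma X_pow_sub_linearizedPolynomial_eq_nodal {x c : Fin n → A} (hx : LinearIndependent F x)
    (hc : mooreMatrix q x *ᵥ c = x ^ q ^ n) :
    Polynomial.X ^ q ^ n - linearizedPolynomial q c =
      Lagrange.nodal Finset.univ (Fintype.linearCombination F x) := by
  have hlt := degree_linearizedPolynomial_lt (Fintype.one_lt_card (α := F)) c
  have hdeg : (Polynomial.X ^ q ^ n - linearizedPolynomial q c).degree = ↑(q ^ n) := by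
    rw [Polynomial.degree_sub_eq_left_of_degree_lt, Polynomial.degree_X_pow]
    rwa [Polynomial.degree_X_pow]
  have hroot (v : Fin n → F) : (linearizedPolynomial q c).eval (Fintype.linearCombination F x v) =
      Fintype.linearCombination F x v ^ q ^ n := by
    rw [eval_linearizedPolynomial, mooreMatrix_linearCombination, ← mulVec_mulVec, hc,
      ← linearCombination_eq_map_mulVec, linearCombination_pow_card_pow]
  refine Polynomial.eq_of_degree_le_of_eval_index_eq Finset.univ
    (linearIndependent_iff_injective_fintypeLinearCombination.mp hx).injOn ?_ ?_ ?_ fun v hv => ?_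
  · simp [hdeg]
  · simp [hdeg, Lagrange.degree_nodal]
  · rw [(Polynomial.monic_X_pow_sub hlt).leadingCoeff, Lagrange.nodal_monic.leadingCoeff]
  · rw [Lagrange.eval_nodal_at_node hv, Polynomial.eval_sub, hroot, Polynomial.eval_pow,
      Polynomial.eval_X, sub_self]

variable [CommRing R] [Algebra R A]

lemma map_X_pow_sub_linearizedPolynomial_eq_nodal {x : Fin n → A} {c : Fin n → R}
    (hx : LinearIndependent F x) (hc : mooreMatrix q x *ᵥ (algebraMap R A ∘ c) = x ^ q ^ n) :
    (Polynomial.X ^ q ^ n - linearizedPolynomial q c).map (algebraMap R A) =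
      Lagrange.nodal Finset.univ (Fintype.linearCombination F x) := by
  rw [← X_pow_sub_linearizedPolynomial_eq_nodal hx hc, Polynomial.map_sub, Polynomial.map_pow,
    Polynomial.map_X, map_linearizedPolynomial]

lemma exists_eq_linearCombination_of_aeval_eq_zero {x : Fin n → A} {c : Fin n → R} {y : A}
    (hx : LinearIndependent F x) (hc : mooreMatrix q x *ᵥ (algebraMap R A ∘ c) = x ^ q ^ n)
    (hy : (Polynomial.X ^ q ^ n - linearizedPolynomial q c).aeval y = 0) :
    ∃ v : Fin n → F, y = Fintype.linearCombination F x v := by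
  rw [← Polynomial.eval_map_algebraMap, map_X_pow_sub_linearizedPolynomial_eq_nodal hx hc,
    Lagrange.eval_nodal, Finset.prod_eq_zero_iff] at hy
  obtain ⟨v, -, hv⟩ := hy
  exact ⟨v, sub_eq_zero.mp hv⟩

end LinearizedPolynomial

section Galois

variable {F E K : Type*} [Field F] [Fintype F] [Field E] [Field K] [Algebra F K] [Algebra E K]
  {n : ℕ}

local notation "q" => Fintype.card F

theorem isGalois_of_mooreMatrix_mulVec_eq {x : Fin n → K} {c : Fin n → E}
    (hx : LinearIndependent F x) (hc : mooreMatrix q x *ᵥ (algebraMap E K ∘ c) = x ^ q ^ n)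
    (htop : IntermediateField.adjoin E (Set.range x) = ⊤) : IsGalois E K := by
  set P := Polynomial.X ^ q ^ n - linearizedPolynomial q c
  have hP : P.map (algebraMap E K) = _ := map_X_pow_sub_linearizedPolynomial_eq_nodal hx hc
  have hsep : P.Separable := by
    rw [← Polynomial.separable_map (algebraMap E K), hP, Lagrange.nodal_eq,
      Polynomial.separable_prod_X_sub_C_iff]
    exact linearIndependent_iff_injective_fintypeLinearCombination.mp hx
  have hroots : Set.range x ⊆ P.rootSet K := by
    rintro _ ⟨j, rfl⟩
    exact Polynomial.mem_rootSet.mpr ⟨hsep.ne_zero, aeval_X_pow_sub_linearizedPolynomial hc j⟩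
  have : P.IsSplittingField E K := by
    refine isSplittingField_iff_intermediateField.mpr
      ⟨?_, eq_top_iff.mpr (htop ▸ IntermediateField.adjoin.mono _ _ _ hroots)⟩
    rw [hP, Lagrange.nodal_eq]
    exact Polynomial.Splits.prod fun v _ => Polynomial.Splits.X_sub_C _
  exact IsGalois.of_separable_splitting_field hsep

theorem exists_generalLinearGroup_comp_eq [Algebra F E] [IsScalarTower F E K] {x : Fin n → K}
    {c : Fin n → E} (hx : LinearIndependent F x)
    (hc : mooreMatrix q x *ᵥ (algebraMap E K ∘ c) = x ^ q ^ n) (τ : K →ₐ[E] K) :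
    ∃ s : GL (Fin n) F, τ ∘ x = (s : Matrix (Fin n) (Fin n) F).map (algebraMap F K) *ᵥ x := by
  have hcomb (j : Fin n) : ∃ v : Fin n → F, τ (x j) = Fintype.linearCombination F x v := by
    apply exists_eq_linearCombination_of_aeval_eq_zero hx hc
    rw [Polynomial.aeval_algHom_apply, aeval_X_pow_sub_linearizedPolynomial hc, map_zero]
  choose s hs using hcomb
  have hτ : τ ∘ x = (Matrix.of s).map (algebraMap F K) *ᵥ x := by
    ext j
    simp [hs, Fintype.linearCombination_apply, mulVec, dotProduct, Algebra.smul_def]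
  have hτx : LinearIndependent F (τ ∘ x) :=
    hx.map' (τ.restrictScalars F).toLinearMap
      (LinearMap.ker_eq_bot.mpr (τ : K →+* K).injective)
  obtain ⟨σ, hσ⟩ := isUnit_of_linearIndependent_map_mulVec (hτ ▸ hτx)
  exact ⟨σ, hσ ▸ hτ⟩

end Galois

section Cramer

lemma cramer_mul_mulVec {ι R : Type*} [Fintype ι] [DecidableEq ι] [CommRing R]
    (s M : Matrix ι ι R) (y : ι → R) : (s * M).cramer (s *ᵥ y) = s.det • M.cramer y := by
  rw [cramer_eq_adjugate_mulVec, cramer_eq_adjugate_mulVec, adjugate_mul_distrib, mulVec_mulVec,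
    Matrix.mul_assoc, adjugate_mul, Matrix.mul_smul, Matrix.mul_one, smul_mulVec]

lemma map_cramer {ι R S : Type*} [Fintype ι] [DecidableEq ι] [CommRing R] [CommRing S]
    (φ : R →+* S) (M : Matrix ι ι R) (y : ι → R) (i : ι) :
    φ (M.cramer y i) = (M.map φ).cramer (φ ∘ y) i := by
  rw [cramer_apply, cramer_apply, RingHom.map_det, RingHom.mapMatrix_apply, map_updateCol]

end Cramer

section Homogeneous

variable {σ ι R : Type*} [CommRing R]

lemma isHomogeneous_det [Fintype ι] [DecidableEq ι] {M : Matrix ι ι (MvPolynomial σ R)}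
    {d : ι → ℕ} (hM : ∀ i k, (M i k).IsHomogeneous (d k)) : M.det.IsHomogeneous (∑ k, d k) := by
  rw [det_apply]
  refine IsHomogeneous.sum _ _ _ fun τ _ => ?_
  exact zsmul_mem (K := homogeneousSubmodule σ R _)
    (IsHomogeneous.prod _ _ _ fun k _ => hM (τ k) k) (Equiv.Perm.sign τ : ℤ)

lemma isHomogeneous_cramer [Fintype ι] [DecidableEq ι] {M : Matrix ι ι (MvPolynomial σ R)}
    {y : ι → MvPolynomial σ R} {d : ι → ℕ} {e : ℕ} (hM : ∀ i k, (M i k).IsHomogeneous (d k))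
    (hy : ∀ i, (y i).IsHomogeneous e) (k : ι) :
    (M.cramer y k).IsHomogeneous (∑ l, Function.update d k e l) := by
  rw [cramer_apply]
  refine isHomogeneous_det fun i l => ?_
  obtain rfl | hl := eq_or_ne l k
  · simpa using hy i
  · simpa [hl] using hM i l

lemma isHomogeneous_mooreMatrix {n d : ℕ} (q : ℕ) {x : ι → MvPolynomial σ R}
    (hx : ∀ i, (x i).IsHomogeneous d) (i : ι) (k : Fin n) :
    (mooreMatrix q x i k).IsHomogeneous (d * q ^ (k : ℕ)) :=
  (hx i).pow _

end Homogeneous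

section InvariantGenerator

variable {ι R S : Type*} [DecidableEq ι] [CommRing R] [CommRing S] {n : ℕ}

/-- The right-hand sides `x i₀ ^ q ^ n` and `x i`, for `i ≠ i₀`, of the linear systems with matrix
`mooreMatrix q (x i₀)` whose solutions generate the invariant field. -/
def mooreTarget (q : ℕ) (i₀ : ι) (x : ι → Fin n → R) : ι → Fin n → R :=
  Function.update x i₀ (x i₀ ^ q ^ n)

lemma mooreTarget_self (q : ℕ) (i₀ : ι) (x : ι → Fin n → R) :
    mooreTarget q i₀ x i₀ = x i₀ ^ q ^ n :=
  Function.update_self ..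

lemma mooreTarget_of_ne (q : ℕ) {i i₀ : ι} (hi : i ≠ i₀) (x : ι → Fin n → R) :
    mooreTarget q i₀ x i = x i :=
  Function.update_of_ne hi ..

lemma comp_mooreTarget (φ : R →+* S) (q : ℕ) (i₀ : ι) (x : ι → Fin n → R) (i : ι) :
    φ ∘ mooreTarget q i₀ x i = mooreTarget q i₀ (fun i => φ ∘ x i) i := by
  obtain rfl | hi := eq_or_ne i i₀
  · ext j
    simp [mooreTarget_self]
  · simp only [mooreTarget_of_ne q hi]

lemma exists_isHomogeneous_mooreTarget {σ : Type*} {d : ℕ} (q : ℕ) (i₀ : ι)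
    {x : ι → Fin n → MvPolynomial σ R} (hx : ∀ i j, (x i j).IsHomogeneous d) (i : ι) :
    ∃ e, ∀ j, (mooreTarget q i₀ x i j).IsHomogeneous e := by
  obtain rfl | hi := eq_or_ne i i₀
  · rw [mooreTarget_self]
    exact ⟨_, fun j => (hx i j).pow _⟩
  · rw [mooreTarget_of_ne q hi]
    exact ⟨d, hx i⟩

lemma adjoin_range_eq_top_of_mooreMatrix_mulVec_eq
    {F E K : Type*} [Field F] [Field E] [Field K] [Algebra F E] [Algebra F K] [Algebra E K]
    [IsScalarTower F E K] {q : ℕ} {i₀ : ι} {x : ι → Fin n → K}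
    (hb : ∀ i, ∃ b : Fin n → E,
      mooreMatrix q (x i₀) *ᵥ (algebraMap E K ∘ b) = mooreTarget q i₀ x i)
    (htop : IntermediateField.adjoin F (Set.range fun p : ι × Fin n => x p.1 p.2) = ⊤) :
    IntermediateField.adjoin E (Set.range (x i₀)) = ⊤ := by
  rw [← IntermediateField.restrictScalars_eq_top_iff (K := F), eq_top_iff, ← htop,
    IntermediateField.adjoin_le_iff]
  rintro _ ⟨⟨i, j⟩, rfl⟩
  have hmem (j : Fin n) : x i₀ j ∈ IntermediateField.adjoin E (Set.range (x i₀)) :=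
    IntermediateField.subset_adjoin _ _ ⟨j, rfl⟩
  obtain rfl | hi := eq_or_ne i i₀
  · exact hmem j
  · obtain ⟨b, hb⟩ := hb i
    rw [mooreTarget_of_ne q hi] at hb
    change x i j ∈ IntermediateField.adjoin E (Set.range (x i₀))
    rw [← hb]
    exact sum_mem (t := Finset.univ) fun k _ =>
      mul_mem (pow_mem (hmem j) _) (algebraMap_mem _ (b k))

/-- The generators of the invariant field in terms of the vectors `x i`. By Cramer's rule the
solutions of the systems with right-hand sides `mooreTarget q i₀ x i` are the quotients of
`M.cramer (mooreTarget q i₀ x i) k` by `M.det`, where `M = mooreMatrix q (x i₀)`. Multiplication by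
`M.det ^ (q - 1)` makes them polynomial. The quotient with index `(i₀, 0)` is already
`± M.det ^ (q - 1)`, and is kept in this form so that the multiplication can be undone. -/
def invariantGenerator (q : ℕ) (i₀ : ι) (x : ι → Fin (n + 1) → R) : ι × Fin (n + 1) → R :=
  Function.update
    (fun p => (mooreMatrix q (x i₀)).det ^ (q - 2) *
      (mooreMatrix q (x i₀)).cramer (mooreTarget q i₀ x p.1) p.2)
    (i₀, 0) ((mooreMatrix q (x i₀)).det ^ (q - 1))

lemma invariantGenerator_self_zero (q : ℕ) (i₀ : ι) (x : ι → Fin (n + 1) → R) :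
    invariantGenerator q i₀ x (i₀, 0) = (mooreMatrix q (x i₀)).det ^ (q - 1) :=
  Function.update_self ..

lemma invariantGenerator_of_ne (q : ℕ) {i₀ : ι} {p : ι × Fin (n + 1)} (hp : p ≠ (i₀, 0))
    (x : ι → Fin (n + 1) → R) :
    invariantGenerator q i₀ x p = (mooreMatrix q (x i₀)).det ^ (q - 2) *
      (mooreMatrix q (x i₀)).cramer (mooreTarget q i₀ x p.1) p.2 :=
  Function.update_of_ne hp ..

lemma map_invariantGenerator (φ : R →+* S) (q : ℕ) (i₀ : ι) (x : ι → Fin (n + 1) → R)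
    (p : ι × Fin (n + 1)) :
    φ (invariantGenerator q i₀ x p) = invariantGenerator q i₀ (fun i => φ ∘ x i) p := by
  obtain rfl | hp := eq_or_ne p (i₀, 0)
  · rw [invariantGenerator_self_zero, invariantGenerator_self_zero, map_pow, map_det_mooreMatrix]
  · rw [invariantGenerator_of_ne q hp, invariantGenerator_of_ne q hp, map_mul, map_pow,
      map_det_mooreMatrix, map_cramer, map_mooreMatrix, comp_mooreTarget]

lemma exists_isHomogeneous_invariantGenerator {σ : Type*} {d : ℕ} (q : ℕ) (i₀ : ι)
    {x : ι → Fin (n + 1) → MvPolynomial σ R} (hx : ∀ i j, (x i j).IsHomogeneous d)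
    (p : ι × Fin (n + 1)) : ∃ e, (invariantGenerator q i₀ x p).IsHomogeneous e := by
  have hM := isHomogeneous_mooreMatrix (n := n + 1) q (hx i₀)
  obtain rfl | hp := eq_or_ne p (i₀, 0)
  · rw [invariantGenerator_self_zero]
    exact ⟨_, (isHomogeneous_det hM).pow _⟩
  · rw [invariantGenerator_of_ne q hp]
    obtain ⟨e, he⟩ := exists_isHomogeneous_mooreTarget q i₀ hx p.1
    exact ⟨_, ((isHomogeneous_det hM).pow _).mul (isHomogeneous_cramer hM he p.2)⟩

variable {F : Type*} [Field F] [Fintype F]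

local notation "q" => Fintype.card F

lemma mooreTarget_map_mulVec [Algebra F R] (i₀ : ι) (s : Matrix (Fin n) (Fin n) F)
    (x : ι → Fin n → R) (i : ι) :
    mooreTarget q i₀ (fun i => s.map (algebraMap F R) *ᵥ x i) i =
      s.map (algebraMap F R) *ᵥ mooreTarget q i₀ x i := by
  obtain rfl | hi := eq_or_ne i i₀
  · rw [mooreTarget_self, mooreTarget_self, map_mulVec_pow_card_pow]
  · rw [mooreTarget_of_ne q hi, mooreTarget_of_ne q hi]

theorem invariantGenerator_map_mulVec [Algebra F R] (i₀ : ι) (s : GL (Fin (n + 1)) F)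
    (x : ι → Fin (n + 1) → R) (p : ι × Fin (n + 1)) :
    invariantGenerator q i₀
        (fun i => (s : Matrix (Fin (n + 1)) (Fin (n + 1)) F).map (algebraMap F R) *ᵥ x i) p =
      invariantGenerator q i₀ x p := by
  have hdet : s.val.det ≠ 0 := ((isUnit_iff_isUnit_det _).mp s.isUnit).ne_zero
  have hs : algebraMap F R s.val.det ^ (q - 1) = 1 := by
    rw [← map_pow, FiniteField.pow_card_sub_one_eq_one _ hdet, map_one]
  obtain rfl | hp := eq_or_ne p (i₀, 0)
  · rw [invariantGenerator_self_zero, invariantGenerator_self_zero, det_mooreMatrix_map_mulVec,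
      mul_pow, hs, one_mul]
  · have hq : q - 1 = q - 2 + 1 := by
      have := Fintype.one_lt_card (α := F)
      omega
    rw [hq, pow_succ] at hs
    rw [invariantGenerator_of_ne q hp, invariantGenerator_of_ne q hp, mooreTarget_map_mulVec,
      det_mooreMatrix_map_mulVec, mooreMatrix_map_mulVec, cramer_mul_mulVec, Pi.smul_apply,
      smul_eq_mul, ← RingHom.mapMatrix_apply, ← RingHom.map_det, mul_pow, mul_mul_mul_comm, hs,
      one_mul]

end InvariantGenerator

section InvariantField

variable {F E K ι : Type*} [Field F] [Fintype F] [Field E] [Field K] [Algebra F K] [Algebra E K]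
  [DecidableEq ι] {n : ℕ} {i₀ : ι} {x : ι → Fin (n + 1) → K}

local notation "q" => Fintype.card F

lemma cramer_div_det_mem_of_invariantGenerator_mem {L : Subfield K}
    (hx : LinearIndependent F (x i₀)) (hL : ∀ p, invariantGenerator q i₀ x p ∈ L)
    (p : ι × Fin (n + 1)) :
    (mooreMatrix q (x i₀)).cramer (mooreTarget q i₀ x p.1) p.2 / (mooreMatrix q (x i₀)).det ∈
      L := by
  have hdet := det_mooreMatrix_ne_zero hx
  have hzero := hL (i₀, 0)
  have hq : 1 < q := Fintype.one_lt_card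
  rw [invariantGenerator_self_zero] at hzero
  obtain rfl | hp := eq_or_ne p (i₀, 0)
  · rw [mooreTarget_self, cramer_mooreMatrix_zero, mul_div_assoc,
      ← pow_sub_one_mul (by omega : q ≠ 0),
      mul_div_cancel_right₀ _ hdet]
    exact L.mul_mem (L.pow_mem (L.neg_mem L.one_mem) n) hzero
  · have hquot := L.div_mem (hL p) hzero
    rwa [invariantGenerator_of_ne q hp, show q - 1 = q - 2 + 1 by omega, pow_succ,
      mul_div_mul_left _ _ (pow_ne_zero _ hdet)] at hquot

lemma exists_mooreMatrix_mulVec_eq_mooreTarget (hx : LinearIndependent F (x i₀))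
    (hE : ∀ p, invariantGenerator q i₀ x p ∈ (algebraMap E K).fieldRange) (i : ι) :
    ∃ b : Fin (n + 1) → E,
      mooreMatrix q (x i₀) *ᵥ (algebraMap E K ∘ b) = mooreTarget q i₀ x i := by
  choose b hb using fun k => cramer_div_det_mem_of_invariantGenerator_mem hx hE (i, k)
  refine ⟨b, ?_⟩
  have hsol : algebraMap E K ∘ b = (mooreMatrix q (x i₀)).det⁻¹ •
      (mooreMatrix q (x i₀)).cramer (mooreTarget q i₀ x i) :=
    funext fun k => (hb k).trans (div_eq_inv_mul _ _)
  rw [hsol, mulVec_smul, mulVec_cramer, inv_smul_smul₀ (det_mooreMatrix_ne_zero hx)]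

variable [Algebra F E] [IsScalarTower F E K]

theorem mem_fieldRange_of_forall_algHom_apply_eq (hx : LinearIndependent F (x i₀))
    (hE : ∀ p, invariantGenerator q i₀ x p ∈ (algebraMap E K).fieldRange)
    (htop : IntermediateField.adjoin F (Set.range fun p : ι × Fin (n + 1) => x p.1 p.2) = ⊤)
    {a : K} (ha : ∀ (s : GL (Fin (n + 1)) F) (τ : K →ₐ[F] K),
      (∀ i, τ ∘ x i = s.val.map (algebraMap F K) *ᵥ x i) → τ a = a) :
    a ∈ (algebraMap E K).fieldRange := by
  have hb := exists_mooreMatrix_mulVec_eq_mooreTarget hx hE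
  obtain ⟨c, hc⟩ := hb i₀
  rw [mooreTarget_self] at hc
  have : IsGalois E K :=
    isGalois_of_mooreMatrix_mulVec_eq hx hc (adjoin_range_eq_top_of_mooreMatrix_mulVec_eq hb htop)
  refine (InfiniteGalois.mem_range_algebraMap_iff_fixed a).mpr fun τ => ?_
  obtain ⟨s, hs⟩ := exists_generalLinearGroup_comp_eq hx hc τ.toAlgHom
  refine ha s (τ.toAlgHom.restrictScalars F) fun i => ?_
  obtain rfl | hi := eq_or_ne i i₀
  · exact hs
  · obtain ⟨b, hb⟩ := hb i
    rw [mooreTarget_of_ne q hi] at hb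
    exact algHom_comp_eq_map_mulVec_of_mooreMatrix_mulVec_eq (τ := τ.toAlgHom) hs hb

end InvariantField

section RationalFunctions

variable {F : Type} [Field F] {m n : ℕ}

/-- The column vector `X_i = ᵗ(x_{i1},…,x_{in})`. -/
def columnVec (F : Type) [Field F] {m : ℕ} (n : ℕ) (i : Fin m) : Fin n → PolyMW F m n :=
  fun j => X (i, j)

lemma matSub_comp_columnVec (s : Matrix (Fin n) (Fin n) F) (i : Fin m) :
    matSub s ∘ columnVec F n i = s.map (algebraMap F (PolyMW F m n)) *ᵥ columnVec F n i := by
  ext1 j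
  simp [matSub, columnVec, mulVec, dotProduct, algebraMap_eq]

lemma linearIndependent_algebraMap_comp_columnVec (i : Fin m) :
    LinearIndependent F (algebraMap (PolyMW F m n) (RatMW F m n) ∘ columnVec F n i) :=
  ((linearIndependent_X (Fin m × Fin n) F).comp (Prod.mk i) (Prod.mk_right_injective i)).map'
    (IsScalarTower.toAlgHom F (PolyMW F m n) (RatMW F m n)).toLinearMap
    (LinearMap.ker_eq_bot.mpr (IsFractionRing.injective (PolyMW F m n) (RatMW F m n)))

lemma fracAct_algebraMap (s : GL (Fin n) F) (f : PolyMW F m n) :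
    fracAct s (algebraMap _ (RatMW F m n) f) = algebraMap _ _ (matSub s.val f) :=
  IsFractionRing.ringEquivOfRingEquiv_algebraMap _ _

lemma algHom_apply_eq_fracAct {s : GL (Fin n) F} {τ : RatMW F m n →ₐ[F] RatMW F m n}
    (hτ : ∀ i, τ ∘ algebraMap (PolyMW F m n) (RatMW F m n) ∘ columnVec F n i =
      s.val.map (algebraMap F (RatMW F m n)) *ᵥ
        (algebraMap (PolyMW F m n) (RatMW F m n) ∘ columnVec F n i)) (a : RatMW F m n) :
    τ a = fracAct s a := by
  have hpoly : (τ.comp (IsScalarTower.toAlgHom F (PolyMW F m n) (RatMW F m n))) =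
      (IsScalarTower.toAlgHom F (PolyMW F m n) (RatMW F m n)).comp (matSub s.val) := by
    refine MvPolynomial.algHom_ext fun ⟨i, j⟩ => ?_
    have hcol := algHom_comp_map_mulVec
      (IsScalarTower.toAlgHom F (PolyMW F m n) (RatMW F m n)) s.val (columnVec F n i)
    rw [← matSub_comp_columnVec] at hcol
    exact congrFun ((hτ i).trans hcol.symm) j
  have hfrac : (τ : RatMW F m n →+* RatMW F m n) = fracAct s :=
    IsLocalization.ringHom_ext (nonZeroDivisors (PolyMW F m n)) <| RingHom.ext fun f =>
      (DFunLike.congr_fun hpoly f).trans (fracAct_algebraMap s f).symm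
  exact DFunLike.congr_fun hfrac a

lemma adjoin_range_algebraMap_columnVec (F : Type) [Field F] (m n : ℕ) :
    IntermediateField.adjoin F (Set.range fun p : Fin m × Fin n =>
      (algebraMap (PolyMW F m n) (RatMW F m n) ∘ columnVec F n p.1) p.2) = ⊤ := by
  have hrange : (IsScalarTower.toAlgHom F (PolyMW F m n) (RatMW F m n)).range =
      Algebra.adjoin F (Set.range fun p : Fin m × Fin n =>
        (algebraMap (PolyMW F m n) (RatMW F m n) ∘ columnVec F n p.1) p.2) := by
    rw [← Algebra.map_top, ← MvPolynomial.adjoin_range_X, AlgHom.map_adjoin, ← Set.range_comp]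
    rfl
  rw [← IsFractionRing.algHom_fieldRange_eq_of_comp_eq_of_range_eq
    (f := AlgHom.id F (RatMW F m n)) rfl hrange]
  exact AlgHom.fieldRange_eq_top.mpr Function.surjective_id

lemma matSub_invariantGenerator_columnVec [Fintype F] (s : GL (Fin (n + 1)) F) (i₀ : Fin m)
    (p : Fin m × Fin (n + 1)) :
    matSub s.val (invariantGenerator (Fintype.card F) i₀ (columnVec F (n + 1)) p) =
      invariantGenerator (Fintype.card F) i₀ (columnVec F (n + 1)) p := by
  have hmap := map_invariantGenerator (matSub (m := m) s.val).toRingHom (Fintype.card F) i₀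
    (columnVec F (n + 1)) p
  simp only [AlgHom.toRingHom_eq_coe, RingHom.coe_coe, matSub_comp_columnVec,
    invariantGenerator_map_mulVec] at hmap
  exact hmap

theorem fixedSubfield_top_le_of_invariantGenerator_mem [Fintype F] {i₀ : Fin m}
    {E : IntermediateField F (RatMW F m (n + 1))}
    (hE : ∀ p, algebraMap (PolyMW F m (n + 1)) (RatMW F m (n + 1))
      (invariantGenerator (Fintype.card F) i₀ (columnVec F (n + 1)) p) ∈ E) :
    fixedSubfield F m (n + 1) ⊤ ≤ E.toSubfield := by
  intro a ha
  let x (i : Fin m) : Fin (n + 1) → RatMW F m (n + 1) := algebraMap _ _ ∘ columnVec F (n + 1) i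
  have hx : LinearIndependent F (x i₀) := linearIndependent_algebraMap_comp_columnVec i₀
  have hgen (p) : invariantGenerator (Fintype.card F) i₀ x p ∈
      (algebraMap E (RatMW F m (n + 1))).fieldRange := by
    rw [← map_invariantGenerator]
    exact ⟨⟨_, hE p⟩, rfl⟩
  obtain ⟨e, rfl⟩ := mem_fieldRange_of_forall_algHom_apply_eq hx hgen
    (adjoin_range_algebraMap_columnVec F m (n + 1)) fun s τ hτ =>
      (algHom_apply_eq_fracAct hτ a).trans (ha s trivial)
  exact e.2

lemma adjoin_range_toSubfield_le_fixedSubfield {ι : Type*} {f : ι → PolyMW F m n}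
    {G : Subgroup (GL (Fin n) F)} (hf : ∀ i, ∀ s ∈ G, matSub s.val (f i) = f i) :
    (IntermediateField.adjoin F (Set.range fun i =>
      algebraMap (PolyMW F m n) (RatMW F m n) (f i))).toSubfield ≤ fixedSubfield F m n G := by
  refine Subfield.closure_le.mpr (Set.union_subset ?_ ?_)
  · rintro _ ⟨c, rfl⟩ s -
    rw [IsScalarTower.algebraMap_apply F (PolyMW F m n), fracAct_algebraMap, AlgHom.commutes]
  · rintro _ ⟨i, rfl⟩ s hs
    rw [fracAct_algebraMap, hf i s hs]

end RationalFunctions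

/-- For every `m, n ≥ 1` there exist `mn` homogeneous polynomials in the invariant ring
`𝔽_q[mW]^{GL_n(𝔽_q)}` that generate the invariant field `𝔽_q(mW)^{GL_n(𝔽_q)}` over `𝔽_q`. -/
theorem invariant_field_gen_GL (F : Type) [Field F] [Fintype F] (m n : ℕ)
    (hm : 1 ≤ m) (hn : 1 ≤ n) :
    ∃ f : Fin (m * n) → PolyMW F m n,
      (∀ i, (∃ d : ℕ, (f i).IsHomogeneous d) ∧
        (∀ σ : GL (Fin n) F, matSub (σ : Matrix (Fin n) (Fin n) F) (f i) = f i)) ∧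
      fixedSubfield F m n ⊤ =
        (IntermediateField.adjoin F
          (Set.range fun i =>
            algebraMap (PolyMW F m n) (RatMW F m n) (f i))).toSubfield := by
  obtain ⟨n, rfl⟩ := Nat.exists_eq_add_of_le' hn
  let i₀ : Fin m := ⟨0, hm⟩
  let f := invariantGenerator (Fintype.card F) i₀ (columnVec F (n + 1))
  have hinv (s : GL (Fin (n + 1)) F) (p) : matSub s.val (f p) = f p :=
    matSub_invariantGenerator_columnVec s i₀ p
  refine ⟨f ∘ finProdFinEquiv.symm, fun k => ⟨?_, fun s => hinv s _⟩, le_antisymm ?_ ?_⟩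
  · exact exists_isHomogeneous_invariantGenerator _ _ (fun i j => isHomogeneous_X F (i, j)) _
  · refine fixedSubfield_top_le_of_invariantGenerator_mem (i₀ := i₀) fun p => ?_
    exact IntermediateField.subset_adjoin _ _ ⟨finProdFinEquiv p, by simp [f]⟩
  · exact adjoin_range_toSubfield_le_fixedSubfield fun k s _ => hinv s _
end
end

section
/- Let n = 1 and m ≥ 1, so that GL_1(𝔽_q) = 𝔽_q^× acts on 𝔽_q(x_{11}, x_{21}, …, x_{m1}) by simultaneous scalar multiplication of all variables. Then the fixed field equals 𝔽_q(x_{11}^{q-1}, x_{21}/x_{11}, x_{31}/x_{11}, …, x_{m1}/x_{11}). -/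
open MvPolynomial Matrix

set_option maxHeartbeats 1000000
set_option synthInstance.maxHeartbeats 400000

noncomputable section

/-!
Let a finite group `G` of order `d` scale all generators `x_i` of a field `L` over `F` by an
injective character, let `t` be a nonzero generator, and put `K = F(tᵈ, x_i / t : i)`. The
generators of `K` are invariant, so `K ≤ L^G`. As `L = K(t)` and `t` is a root of `Tᵈ - tᵈ`, we
have `[L : K] ≤ d`; on the other hand `G` provides `d` distinct endomorphisms of `L` over `L^G`,
so `[L : L^G] ≥ d` by Dedekind's independence of characters. Hence `K = L^G`.
-/

section CommonFixedField

variable {F L ι : Type*} [Field F] [Field L] [Algebra F L]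

/-- The intermediate field of elements fixed by every member of a family of `F`-endomorphisms
of `L`. The family need not be closed under composition, so no group action is required. -/
def commonFixedField (ρ : ι → L →ₐ[F] L) : IntermediateField F L :=
  (⨅ i, (ρ i : L →+* L).eqLocusField (RingHom.id L)).toIntermediateField fun c => by
    simp [Subfield.mem_iInf]

lemma mem_commonFixedField {ρ : ι → L →ₐ[F] L} {a : L} :
    a ∈ commonFixedField ρ ↔ ∀ i, ρ i a = a := by
  change a ∈ (⨅ i, (ρ i : L →+* L).eqLocusField (RingHom.id L)) ↔ _
  simp [Subfield.mem_iInf]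

lemma card_le_finrank_commonFixedField {ρ : ι → L →ₐ[F] L} (hρ : Function.Injective ρ)
    [FiniteDimensional (commonFixedField ρ) L] :
    Nat.card ι ≤ Module.finrank (commonFixedField ρ) L := by
  let ρ' (i : ι) : L →ₐ[commonFixedField ρ] L :=
    { (ρ i : L →+* L) with commutes' := fun c => mem_commonFixedField.1 c.2 i }
  have hρ' : Function.Injective ρ' := fun i j hij =>
    hρ (AlgHom.ext fun a => DFunLike.congr_fun hij a)
  calc Nat.card ι ≤ Nat.card (L →ₐ[commonFixedField ρ] L) :=
        Nat.card_le_card_of_injective ρ' hρ'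
    _ ≤ Module.finrank (commonFixedField ρ) L := by
        rw [Nat.card_eq_fintype_card]
        exact AlgHom.card_le

lemma eq_commonFixedField_of_finrank_le_card {ρ : ι → L →ₐ[F] L} (hρ : Function.Injective ρ)
    {K : IntermediateField F L} [FiniteDimensional K L] (hK : K ≤ commonFixedField ρ)
    (hcard : Module.finrank K L ≤ Nat.card ι) : K = commonFixedField ρ := by
  have : FiniteDimensional (commonFixedField ρ) L :=
    letI := (IntermediateField.inclusion hK).toRingHom.toAlgebra
    haveI : IsScalarTower K (commonFixedField ρ) L := .of_algebraMap_eq fun _ => rfl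
    .right K _ L
  exact IntermediateField.eq_of_le_of_finrank_le' hK
    (hcard.trans (card_le_finrank_commonFixedField hρ))

end CommonFixedField

section Radical

open IntermediateField

variable {K L : Type*} [Field K] [Field L] [Algebra K L]

lemma finiteDimensional_of_adjoin_simple_eq_top {t : L} (ht : K⟮t⟯ = ⊤) (hint : IsIntegral K t) :
    FiniteDimensional K L := by
  have := adjoin.finiteDimensional hint
  rw [ht] at this
  exact Module.Finite.equiv (topEquiv (F := K) (E := L)).toLinearEquiv

lemma isIntegral_of_pow_eq_algebraMap {t : L} {n : ℕ} (hn : 0 < n) {c : K}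
    (hc : t ^ n = algebraMap K L c) : IsIntegral K t :=
  .of_pow hn (hc ▸ isIntegral_algebraMap)

lemma finrank_le_of_pow_eq_algebraMap {t : L} (ht : K⟮t⟯ = ⊤) {n : ℕ} (hn : 0 < n) {c : K}
    (hc : t ^ n = algebraMap K L c) : Module.finrank K L ≤ n := by
  have hroot : Polynomial.aeval t (Polynomial.X ^ n - Polynomial.C c) = 0 := by simp [hc]
  calc Module.finrank K L = (minpoly K t).natDegree := by
        rw [← finrank_top', ← ht, adjoin.finrank (isIntegral_of_pow_eq_algebraMap hn hc)]
    _ ≤ (Polynomial.X ^ n - Polynomial.C c).natDegree :=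
        Polynomial.natDegree_le_of_dvd (minpoly.dvd K t hroot) (Polynomial.X_pow_sub_C_ne_zero hn c)
    _ = n := Polynomial.natDegree_X_pow_sub_C

end Radical

section Scaling

variable {F L ι : Type*} [Field F] [Field L] [Algebra F L]

open IntermediateField in
lemma adjoin_simple_eq_top_of_div_mem {K : IntermediateField F L} {x : ι → L} {i₀ : ι}
    (hx : adjoin F (Set.range x) = ⊤) (h₀ : x i₀ ≠ 0) (hK : ∀ i, x i / x i₀ ∈ K) :
    K⟮x i₀⟯ = ⊤ := by
  rw [← restrictScalars_eq_top_iff (K := F), restrictScalars_adjoin, ← top_le_iff, ← hx,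
    adjoin_le_iff]
  rintro _ ⟨i, rfl⟩
  rw [← div_mul_cancel₀ (x i) h₀]
  exact mul_mem (subset_adjoin _ _ (.inl (hK i))) (subset_adjoin _ _ (.inr rfl))

variable (F) in
/-- The subfield `F(tᵈ, x_i / t : i)` of `L`, where `t = x_{i₀}`; for `t ≠ 0` it is the candidate
for the invariants of a group of order `d` that scales all `x_i` simultaneously. -/
def scalingField (x : ι → L) (i₀ : ι) (d : ℕ) : IntermediateField F L :=
  IntermediateField.adjoin F ({x i₀ ^ d} ∪ {a | ∃ i, i ≠ i₀ ∧ a = x i / x i₀})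

variable {x : ι → L} {i₀ : ι} {d : ℕ}

lemma pow_mem_scalingField : x i₀ ^ d ∈ scalingField F x i₀ d :=
  IntermediateField.subset_adjoin F _ (Or.inl rfl)

lemma div_mem_scalingField (h₀ : x i₀ ≠ 0) (i : ι) : x i / x i₀ ∈ scalingField F x i₀ d := by
  obtain rfl | hi := eq_or_ne i i₀
  · exact div_self h₀ ▸ one_mem _
  · exact IntermediateField.subset_adjoin F _ (Or.inr ⟨i, hi, rfl⟩)

lemma injective_of_scaling {G : Type*} {χ : G → Fˣ} {ρ : G → L →ₐ[F] L}
    (hχ : Function.Injective χ) {y : L} (hy : y ≠ 0) (hρ : ∀ g, ρ g y = χ g • y) :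
    Function.Injective ρ := by
  intro g h hgh
  have hsmul : (χ g : F) • y = (χ h : F) • y := by
    simpa only [hρ, Units.smul_def] using DFunLike.congr_fun hgh y
  exact hχ (Units.ext (smul_left_injective F hy hsmul))

variable {G : Type*} [Group G] {χ : G →* Fˣ} {ρ : G → L →ₐ[F] L}

lemma scalingField_le_commonFixedField (hρ : ∀ g i, ρ g (x i) = χ g • x i) :
    scalingField F x i₀ (Nat.card G) ≤ commonFixedField ρ := by
  refine IntermediateField.adjoin_le_iff.2 fun a ha => mem_commonFixedField.2 fun g => ?_
  obtain rfl | ⟨i, -, rfl⟩ := ha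
  · rw [map_pow, hρ, smul_pow, ← map_pow, pow_card_eq_one', map_one, one_smul]
  · have hχg : algebraMap F L (χ g) ≠ 0 := (map_ne_zero _).2 (χ g).ne_zero
    simp only [map_div₀, hρ, Units.smul_def, Algebra.smul_def, mul_div_mul_left _ _ hχg]

theorem commonFixedField_eq_scalingField [Finite G] (hχ : Function.Injective χ)
    (hρ : ∀ g i, ρ g (x i) = χ g • x i) (hx : IntermediateField.adjoin F (Set.range x) = ⊤)
    (h₀ : x i₀ ≠ 0) : commonFixedField ρ = scalingField F x i₀ (Nat.card G) := by
  let c : scalingField F x i₀ (Nat.card G) := ⟨_, pow_mem_scalingField⟩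
  have hc : x i₀ ^ Nat.card G = algebraMap _ L c := rfl
  have htop := adjoin_simple_eq_top_of_div_mem hx h₀ (div_mem_scalingField (d := Nat.card G) h₀)
  have := finiteDimensional_of_adjoin_simple_eq_top htop
    (isIntegral_of_pow_eq_algebraMap Nat.card_pos hc)
  exact (eq_commonFixedField_of_finrank_le_card (injective_of_scaling hχ h₀ (hρ · i₀))
    (scalingField_le_commonFixedField hρ)
    (finrank_le_of_pow_eq_algebraMap htop Nat.card_pos hc)).symm

end Scaling

lemma adjoin_range_algebraMap_X (F σ K : Type*) [Field F] [Field K] [Algebra F K]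
    [Algebra (MvPolynomial σ F) K] [IsScalarTower F (MvPolynomial σ F) K]
    [IsFractionRing (MvPolynomial σ F) K] :
    IntermediateField.adjoin F (Set.range fun i => algebraMap (MvPolynomial σ F) K (X i)) = ⊤ := by
  let g := IsScalarTower.toAlgHom F (MvPolynomial σ F) K
  have hg : g.range =
      Algebra.adjoin F (Set.range fun i => algebraMap (MvPolynomial σ F) K (X i)) := by
    rw [← Algebra.map_top, ← adjoin_range_X, AlgHom.map_adjoin, ← Set.range_comp]
    rfl
  rw [← IsFractionRing.algHom_fieldRange_eq_of_comp_eq_of_range_eq (f := AlgHom.id F K) (g := g)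
    rfl hg]
  exact AlgHom.fieldRange_eq_top.2 Function.surjective_id

section MatrixAction

variable {F : Type} [Field F] {m n : ℕ}

/-- The automorphism `fracAct σ` of `𝔽_q(mW)`, as a homomorphism of `𝔽_q`-algebras. -/
def fracActAlgHom (σ : GL (Fin n) F) : RatMW F m n →ₐ[F] RatMW F m n :=
  (IsFractionRing.algEquivOfAlgEquiv (matAut (m := m) σ) : RatMW F m n ≃ₐ[F] RatMW F m n).toAlgHom

lemma fixedSubfield_eq_commonFixedField (G : Subgroup (GL (Fin n) F)) :
    fixedSubfield F m n G =
      (commonFixedField fun σ : G => fracActAlgHom (m := m) (σ : GL (Fin n) F)).toSubfield := by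
  ext a
  rw [IntermediateField.mem_toSubfield, mem_commonFixedField]
  exact Subtype.forall' (p := (· ∈ G)) (q := fun σ _ => fracAct σ a = a)

lemma fracActAlgHom_algebraMap (σ : GL (Fin n) F) (p : PolyMW F m n) :
    fracActAlgHom σ (algebraMap (PolyMW F m n) (RatMW F m n) p) =
      algebraMap (PolyMW F m n) (RatMW F m n) (matSub (σ : Matrix (Fin n) (Fin n) F) p) :=
  IsFractionRing.ringEquivOfRingEquiv_algebraMap (K := RatMW F m n) (L := RatMW F m n)
    (matAut (m := m) σ).toRingEquiv p

lemma fracActAlgHom_X (σ : GL (Fin 1) F) (i : Fin m) :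
    fracActAlgHom σ (algebraMap (PolyMW F m 1) (RatMW F m 1) (X (i, 0))) =
      Matrix.GeneralLinearGroup.det σ • algebraMap (PolyMW F m 1) (RatMW F m 1) (X (i, 0)) := by
  rw [fracActAlgHom_algebraMap]
  simp [matSub, Units.smul_def, Algebra.smul_def, MvPolynomial.algebraMap_eq,
    IsScalarTower.algebraMap_apply F (PolyMW F m 1) (RatMW F m 1)]

lemma adjoin_range_algebraMap_X_fin_one :
    IntermediateField.adjoin F (Set.range fun i : Fin m =>
      algebraMap (PolyMW F m 1) (RatMW F m 1) (X (i, 0))) = ⊤ := by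
  rw [← adjoin_range_algebraMap_X F (Fin m × Fin 1) (RatMW F m 1),
    ← (Equiv.prodUnique (Fin m) (Fin 1)).symm.surjective.range_comp]
  rfl

end MatrixAction

lemma det_injective_of_fin_one (R : Type*) [CommRing R] :
    Function.Injective (Matrix.GeneralLinearGroup.det : GL (Fin 1) R →* Rˣ) := by
  intro σ τ h
  ext i j
  rw [Subsingleton.elim i 0, Subsingleton.elim j 0]
  simpa using congrArg Units.val h

theorem rank_one_case_general (F : Type) [Field F] (m : ℕ) (hm : 1 ≤ m)
    (G : Subgroup (GL (Fin 1) F)) [Finite G] :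
    fixedSubfield F m 1 G =
      (IntermediateField.adjoin F
        ({algebraMap (PolyMW F m 1) (RatMW F m 1) (X (⟨0, hm⟩, 0)) ^ Nat.card G} ∪
         {a : RatMW F m 1 | ∃ i : Fin m, i ≠ ⟨0, hm⟩ ∧
            a = algebraMap (PolyMW F m 1) (RatMW F m 1) (X (i, 0)) /
              algebraMap (PolyMW F m 1) (RatMW F m 1) (X (⟨0, hm⟩, 0))})).toSubfield := by
  rw [fixedSubfield_eq_commonFixedField, commonFixedField_eq_scalingField
    (x := fun i : Fin m => algebraMap (PolyMW F m 1) (RatMW F m 1) (X (i, 0)))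
    (i₀ := ⟨0, hm⟩) (χ := Matrix.GeneralLinearGroup.det.comp G.subtype)
    ((det_injective_of_fin_one F).comp G.subtype_injective)
    (fun σ i => fracActAlgHom_X (σ : GL (Fin 1) F) i) adjoin_range_algebraMap_X_fin_one
    ((FaithfulSMul.algebraMap_eq_zero_iff _ _).not.2 (X_ne_zero _)), scalingField]

/-- For `n = 1` and `m ≥ 1`: the fixed field of `GL_1(𝔽_q) = 𝔽_q^×` acting on
`𝔽_q(x_{11}, …, x_{m1})` by simultaneous scalar multiplication equals
`𝔽_q(x_{11}^{q-1}, x_{21}/x_{11}, …, x_{m1}/x_{11})`. -/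
theorem rank_one_case (F : Type) [Field F] [Fintype F] (m : ℕ) (hm : 1 ≤ m) :
    fixedSubfield F m 1 ⊤ =
      (IntermediateField.adjoin F
        ({algebraMap (PolyMW F m 1) (RatMW F m 1) (X (⟨0, hm⟩, 0)) ^ (Fintype.card F - 1)} ∪
         {a : RatMW F m 1 | ∃ i : Fin m, i ≠ ⟨0, hm⟩ ∧
            a = algebraMap (PolyMW F m 1) (RatMW F m 1) (X (i, 0)) /
              algebraMap (PolyMW F m 1) (RatMW F m 1) (X (⟨0, hm⟩, 0))})).toSubfield := by
  simpa [Nat.card_eq_fintype_card, Matrix.card_GL_field] using rank_one_case_general F m hm ⊤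

end
end

section
/- Let V be a faithful k-dimensional representation of a finite group H over a field 𝔽 and let G ≤ H be a subgroup. Suppose there exist f_1,…,f_k ∈ 𝔽(V)^G with 𝔽(V)^G = 𝔽(f_1,…,f_k), and there exists a homogeneous polynomial f ∈ 𝔽[f_1,…,f_k] ∩ 𝔽[V]^G such that 𝔽[f_1,…,f_k][f^{-1}] ⊆ 𝔽[V]^G[f^{-1}] inside 𝔽(V). If 𝔽[V]^G[f^{-1}] is integral over 𝔽[f_1,…,f_k][f^{-1}], then 𝔽[V]^G[f^{-1}] = 𝔽[f_1,…,f_k][f^{-1}]. -/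
/-!
Since `G` is finite, `𝔽(V)` is algebraic over `𝔽(V)^G = 𝔽(f_1,…,f_k)`. As `𝔽(V)` has transcendence
degree `k`, the `k` generators are algebraically independent, so `𝔽[f_1,…,f_k]` is a polynomial ring
and its localization `𝔽[f_1,…,f_k][f⁻¹]` is integrally closed in its fraction field `𝔽(V)^G`, which
contains `𝔽[V]^G[f⁻¹]`.
-/

open MvPolynomial Matrix

set_option maxHeartbeats 1000000
set_option synthInstance.maxHeartbeats 400000

noncomputable section

/-- The polynomial ring `𝔽[V]` of a `k`-dimensional representation `V`:
a polynomial ring in `k` variables. -/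
abbrev PolyV (F : Type) [Field F] (k : ℕ) : Type := MvPolynomial (Fin k) F

/-- The rational function field `𝔽(V)`. -/
abbrev RatV (F : Type) [Field F] (k : ℕ) : Type := FractionRing (PolyV F k)

/-- The substitution endomorphism of `𝔽[V]` induced by a matrix `σ`. -/
def matSubV {F : Type} [Field F] {k : ℕ} (σ : Matrix (Fin k) (Fin k) F) :
    PolyV F k →ₐ[F] PolyV F k :=
  aeval fun j => ∑ l, C (σ j l) * X l

lemma matSubV_comp {F : Type} [Field F] {k : ℕ} (A B : Matrix (Fin k) (Fin k) F) :
    (matSubV (F := F) A).comp (matSubV B) = matSubV (B * A) := by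
  apply MvPolynomial.algHom_ext
  intro j
  simp only [AlgHom.coe_comp, Function.comp_apply, matSubV, aeval_X, map_sum, _root_.map_mul,
    aeval_C, MvPolynomial.algebraMap_eq, Finset.mul_sum]
  rw [Finset.sum_comm]
  refine Finset.sum_congr rfl fun s _ => ?_
  calc ∑ l, C (B j l) * (C (A l s) * X s)
      = (∑ l, C (B j l * A l s)) * X s := by
        rw [Finset.sum_mul]
        simp [C_mul, mul_assoc]
    _ = C ((B * A) j s) * X s := by
        rw [Matrix.mul_apply, map_sum]

lemma matSubV_one {F : Type} [Field F] {k : ℕ} :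
    matSubV (F := F) (1 : Matrix (Fin k) (Fin k) F) = AlgHom.id F _ := by
  apply MvPolynomial.algHom_ext
  intro j
  simp [matSubV, Matrix.one_apply, ite_mul, apply_ite (C (σ := Fin k) (R := F))]

/-- The algebra automorphism of `𝔽[V]` induced by `σ ∈ GL_k(𝔽)`. -/
def matAutV {F : Type} [Field F] {k : ℕ} (σ : GL (Fin k) F) :
    PolyV F k ≃ₐ[F] PolyV F k :=
  AlgEquiv.ofAlgHom (matSubV (σ : Matrix (Fin k) (Fin k) F))
    (matSubV ((↑(σ⁻¹) : Matrix (Fin k) (Fin k) F)))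
    (by rw [matSubV_comp, σ.inv_mul, matSubV_one])
    (by rw [matSubV_comp, σ.mul_inv, matSubV_one])

/-- The automorphism of `𝔽(V)` induced by `σ ∈ GL_k(𝔽)`. -/
def fracActV {F : Type} [Field F] {k : ℕ} (σ : GL (Fin k) F) :
    RatV F k →+* RatV F k :=
  (IsFractionRing.ringEquivOfRingEquiv
    ((matAutV (F := F) (k := k) σ).toRingEquiv) :
    RatV F k ≃+* RatV F k).toRingHom

section AwayAdjoin

variable {A K : Type*} [CommRing A] [Field K] [Algebra A K] [FaithfulSMul A K] {a : A}

lemma exists_mul_pow_eq_algebraMap_of_mem_adjoin_inv (ha : a ≠ 0) {x : K}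
    (hx : x ∈ Algebra.adjoin A {(algebraMap A K a)⁻¹}) :
    ∃ (n : ℕ) (b : A), x * algebraMap A K a ^ n = algebraMap A K b := by
  have ha' : algebraMap A K a ≠ 0 := by rwa [Ne, FaithfulSMul.algebraMap_eq_zero_iff]
  induction hx using Algebra.adjoin_induction with
  | mem x hx => exact ⟨1, 1, by simp [Set.mem_singleton_iff.mp hx, ha']⟩
  | algebraMap b => exact ⟨0, b, by simp⟩
  | add x y _ _ hx hy =>
    obtain ⟨m, b, hb⟩ := hx
    obtain ⟨n, c, hc⟩ := hy
    refine ⟨m + n, b * a ^ n + c * a ^ m, ?_⟩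
    simp only [map_add, _root_.map_mul, map_pow, ← hb, ← hc]
    ring
  | mul x y _ _ hx hy =>
    obtain ⟨m, b, hb⟩ := hx
    obtain ⟨n, c, hc⟩ := hy
    refine ⟨m + n, b * c, ?_⟩
    rw [_root_.map_mul, ← hb, ← hc]
    ring

lemma isLocalizationAway_adjoin_inv (ha : a ≠ 0) :
    IsLocalization.Away a (Algebra.adjoin A {(algebraMap A K a)⁻¹}) := by
  have ha' : algebraMap A K a ≠ 0 := by rwa [Ne, FaithfulSMul.algebraMap_eq_zero_iff]
  have hunit : IsUnit (algebraMap A (Algebra.adjoin A {(algebraMap A K a)⁻¹}) a) :=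
    IsUnit.of_mul_eq_one ⟨_, Algebra.self_mem_adjoin_singleton A _⟩
      (Subtype.ext (mul_inv_cancel₀ ha'))
  refine ⟨?_, fun x => ?_, fun {b c} hbc => ?_⟩
  · rintro ⟨_, n, rfl⟩
    simpa only [map_pow] using hunit.pow n
  · obtain ⟨n, b, hb⟩ := exists_mul_pow_eq_algebraMap_of_mem_adjoin_inv ha x.2
    exact ⟨(b, ⟨a ^ n, n, rfl⟩), Subtype.ext (by simpa using hb)⟩
  · exact ⟨1, by rw [FaithfulSMul.algebraMap_injective A K (congrArg Subtype.val hbc)]⟩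

end AwayAdjoin

section Adjoin

lemma isIntegrallyClosed_adjoin_union_inv {R K : Type*} [CommRing R] [Field K] [Algebra R K]
    {s : Set K} [IsIntegrallyClosed (Algebra.adjoin R s)] {q : K}
    (hq : q ∈ Algebra.adjoin R s) (hq0 : q ≠ 0) :
    IsIntegrallyClosed (Algebra.adjoin R (s ∪ {q⁻¹})) := by
  let q' : Algebra.adjoin R s := ⟨q, hq⟩
  have hq_ne : q' ≠ 0 := Subtype.coe_ne_coe.mp hq0
  have := isLocalizationAway_adjoin_inv (K := K) hq_ne
  rw [Algebra.adjoin_union_eq_adjoin_adjoin]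
  exact isIntegrallyClosed_of_isLocalization
    (Algebra.adjoin (Algebra.adjoin R s) {(algebraMap _ K q')⁻¹}) (Submonoid.powers q')
    (powers_le_nonZeroDivisors_of_noZeroDivisors hq_ne)

lemma isIntegrallyClosed_adjoin_of_algebraicIndependent {R A ι : Type*} [CommRing R] [IsDomain R]
    [UniqueFactorizationMonoid R] [CommRing A] [Algebra R A] {f : ι → A}
    (hf : AlgebraicIndependent R f) :
    IsIntegrallyClosed (Algebra.adjoin R (Set.range f)) :=
  IsIntegrallyClosed.of_equiv hf.aevalEquiv.toRingEquiv

variable {F K : Type*} [Field F] [Field K] [Algebra F K]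

open scoped IntermediateField.algebraAdjoinAdjoin in
lemma mem_algebraAdjoin_of_isIntegral {s : Set K} [IsIntegrallyClosed (Algebra.adjoin F s)] {x : K}
    (hx : x ∈ IntermediateField.adjoin F s) (hint : IsIntegral (Algebra.adjoin F s) x) :
    x ∈ Algebra.adjoin F s := by
  have hint' : IsIntegral (Algebra.adjoin F s) (⟨x, hx⟩ : IntermediateField.adjoin F s) :=
    (isIntegral_algebraMap_iff (algebraMap (IntermediateField.adjoin F s) K).injective).mp hint
  obtain ⟨y, hy⟩ := IsIntegrallyClosed.algebraMap_eq_of_integral hint'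
  have hyx : (y : K) = x := congrArg Subtype.val hy
  exact hyx ▸ y.2

theorem eq_adjoin_range_union_inv_of_isIntegral {ι : Type*} {f : ι → K}
    (hf : AlgebraicIndependent F f) {q : K} (hq : q ∈ Algebra.adjoin F (Set.range f)) (hq0 : q ≠ 0)
    {S : Subalgebra F K} (hS : S ≤ (IntermediateField.adjoin F (Set.range f)).toSubalgebra)
    (hsub : Algebra.adjoin F (Set.range f ∪ {q⁻¹}) ≤ S)
    (hint : ∀ x ∈ S, IsIntegral (Algebra.adjoin F (Set.range f ∪ {q⁻¹})) x) :
    S = Algebra.adjoin F (Set.range f ∪ {q⁻¹}) := by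
  have := isIntegrallyClosed_adjoin_of_algebraicIndependent hf
  have := isIntegrallyClosed_adjoin_union_inv hq hq0
  refine le_antisymm (fun x hx => mem_algebraAdjoin_of_isIntegral ?_ (hint x hx)) hsub
  exact IntermediateField.adjoin.mono F _ _ Set.subset_union_left (hS hx)

end Adjoin

section FixedField

universe u v

variable {F : Type*} {K : Type u} [Field F] [Field K] [Algebra F K]

lemma isAlgebraic_fixedField (Γ : Subgroup (K ≃ₐ[F] K)) [Finite Γ] :
    Algebra.IsAlgebraic (IntermediateField.fixedField Γ) K :=
  ⟨fun x => (FixedPoints.isIntegral Γ K x).isAlgebraic⟩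

lemma algebraicIndependent_of_fixedField_eq_adjoin {ι : Type v} [Finite ι] {f : ι → K}
    {Γ : Subgroup (K ≃ₐ[F] K)} [Finite Γ]
    (hΓ : IntermediateField.fixedField Γ = IntermediateField.adjoin F (Set.range f))
    (hι : Cardinal.lift.{u} (Cardinal.mk ι) ≤ Cardinal.lift.{v} (Algebra.trdeg F K)) :
    AlgebraicIndependent F f := by
  have : Algebra.IsAlgebraic (IntermediateField.adjoin F (Set.range f)) K :=
    hΓ ▸ isAlgebraic_fixedField Γ
  have := IntermediateField.isAlgebraic_adjoin_iff_top.mp this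
  exact (Algebra.IsAlgebraic.isTranscendenceBasis_of_lift_le_trdeg_of_finite F f hι).1

end FixedField

section Representation

variable {F : Type} [Field F] {k : ℕ}

lemma trdeg_ratV : Algebra.trdeg F (RatV F k) = k := by
  have : Algebra.IsAlgebraic (PolyV F k) (RatV F k) :=
    IsLocalization.isAlgebraic _ (nonZeroDivisors (PolyV F k))
  have hX := (IsTranscendenceBasis.mvPolynomial (Fin k) F).algebraMap_comp (A := RatV F k)
  simpa using hX.cardinalMk_eq_trdeg.symm

lemma fracActV_algebraMap (σ : GL (Fin k) F) (r : PolyV F k) :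
    fracActV σ (algebraMap _ (RatV F k) r) =
      algebraMap _ (RatV F k) (matSubV (σ : Matrix (Fin k) (Fin k) F) r) :=
  IsFractionRing.ringEquivOfRingEquiv_algebraMap (matAutV σ).toRingEquiv r

/-- The left action of `GL_k(𝔽)` on `𝔽[V]`. Since `matAutV` reverses products, `σ` has to act by
the substitution of `σ⁻¹`. -/
def matAutVHom : GL (Fin k) F →* (PolyV F k ≃ₐ[F] PolyV F k) where
  toFun σ := matAutV σ⁻¹
  map_one' := AlgEquiv.ext fun r => by
    simp [matAutV, matSubV_one]
  map_mul' σ τ := AlgEquiv.ext fun r => by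
    simp [matAutV, ← matSubV_comp]

/-- The left action of `GL_k(𝔽)` on `𝔽(V)`, extending `matAutVHom`; thus `σ` acts by
`fracActV σ⁻¹`. -/
def fracActVHom : GL (Fin k) F →* (RatV F k ≃ₐ[F] RatV F k) :=
  (IsFractionRing.fieldEquivOfAlgEquivHom F (RatV F k)).comp matAutVHom

lemma fracActVHom_apply (σ : GL (Fin k) F) (x : RatV F k) :
    fracActVHom σ x = fracActV σ⁻¹ x :=
  rfl

variable {H : Type*} [Group H] (ρ : H →* GL (Fin k) F) (G : Subgroup H)

lemma mem_fixedField_map_fracActVHom {x : RatV F k} :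
    x ∈ IntermediateField.fixedField (G.map (fracActVHom.comp ρ)) ↔
      ∀ h ∈ G, fracActV (ρ h) x = x := by
  simp only [IntermediateField.mem_fixedField_iff, Subgroup.mem_map, forall_exists_index, and_imp,
    forall_apply_eq_imp_iff₂, MonoidHom.comp_apply, fracActVHom_apply, ← map_inv]
  exact ⟨fun hx h hh => by simpa using hx h⁻¹ (inv_mem hh), fun hx h hh => hx h⁻¹ (inv_mem hh)⟩

/-- The invariant ring `𝔽[V]^G`. -/
def invariantsV : Subalgebra F (PolyV F k) where
  carrier := {r | ∀ h ∈ G, matSubV (ρ h : Matrix (Fin k) (Fin k) F) r = r}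
  mul_mem' hr hs h hh := by rw [_root_.map_mul, hr h hh, hs h hh]
  add_mem' hr hs h hh := by rw [map_add, hr h hh, hs h hh]
  algebraMap_mem' c _ _ := AlgHom.commutes _ c

theorem localized_criterion_integral_general [Finite G] (f : Fin k → RatV F k)
    (hgen : {a : RatV F k | ∀ h ∈ G, fracActV (ρ h) a = a} =
      ↑(IntermediateField.adjoin F (Set.range f)))
    {q : RatV F k} (hq : q ∈ Algebra.adjoin F (Set.range f)) (hq0 : q ≠ 0)
    (hsub : Algebra.adjoin F (Set.range f ∪ {q⁻¹}) ≤
      Algebra.adjoin F (algebraMap (PolyV F k) (RatV F k) '' invariantsV ρ G ∪ {q⁻¹}))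
    (hint : ∀ x ∈ Algebra.adjoin F (algebraMap (PolyV F k) (RatV F k) '' invariantsV ρ G ∪ {q⁻¹}),
      IsIntegral (Algebra.adjoin F (Set.range f ∪ {q⁻¹})) x) :
    Algebra.adjoin F (algebraMap (PolyV F k) (RatV F k) '' invariantsV ρ G ∪ {q⁻¹}) =
      Algebra.adjoin F (Set.range f ∪ {q⁻¹}) := by
  have hfixed : IntermediateField.fixedField (G.map (fracActVHom.comp ρ)) =
      IntermediateField.adjoin F (Set.range f) :=
    SetLike.coe_injective <|
      (Set.ext fun _ => mem_fixedField_map_fracActVHom ρ G).trans hgen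
  have : Finite (G.map (fracActVHom.comp ρ)) := Set.toFinite (_ '' _)
  have hindep : AlgebraicIndependent F f :=
    algebraicIndependent_of_fixedField_eq_adjoin hfixed (by simp [trdeg_ratV])
  refine eq_adjoin_range_union_inv_of_isIntegral hindep hq hq0 (Algebra.adjoin_le ?_) hsub hint
  rintro _ (⟨r, hr, rfl⟩ | rfl)
  · refine hgen.subset fun h hh => ?_
    rw [fracActV_algebraMap, hr h hh]
  · exact IntermediateField.inv_mem _ (IntermediateField.algebra_adjoin_le_adjoin F _ hq)

end Representation

/-- **A criterion for an invariant ring to be a localized polynomial ring (integral form).**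
Let `V` be a faithful `k`-dimensional representation of a finite group `H` over a field `𝔽`
(given by an injective `ρ : H →* GL_k(𝔽)`) and `G ≤ H`.  Suppose `𝔽(V)^G = 𝔽(f_1,…,f_k)`
with `f_1,…,f_k ∈ 𝔽(V)^G`, and `f` is a homogeneous polynomial in
`𝔽[f_1,…,f_k] ∩ 𝔽[V]^G` with `𝔽[f_1,…,f_k][f⁻¹] ⊆ 𝔽[V]^G[f⁻¹]`.  If `𝔽[V]^G[f⁻¹]` is
integral over `𝔽[f_1,…,f_k][f⁻¹]`, then `𝔽[V]^G[f⁻¹] = 𝔽[f_1,…,f_k][f⁻¹]`. -/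
theorem localized_criterion_integral (F : Type) [Field F] (k : ℕ)
    (H : Type) [Group H] [Finite H]
    (ρ : H →* GL (Fin k) F) (hfaithful : Function.Injective ρ)
    (G : Subgroup H)
    (f : Fin k → RatV F k)
    (hfG : ∀ i, ∀ h ∈ G, fracActV (ρ h) (f i) = f i)
    (hgen : {a : RatV F k | ∀ h ∈ G, fracActV (ρ h) a = a} =
      ↑(IntermediateField.adjoin F (Set.range f)))
    (p : PolyV F k) (dp : ℕ) (hphom : p.IsHomogeneous dp) (hp0 : p ≠ 0)
    (hpG : ∀ h ∈ G, matSubV ((ρ h : GL (Fin k) F) : Matrix (Fin k) (Fin k) F) p = p)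
    (hpadj : algebraMap (PolyV F k) (RatV F k) p ∈ Algebra.adjoin F (Set.range f))
    (hsub : Algebra.adjoin F
        (Set.range f ∪ {(algebraMap (PolyV F k) (RatV F k) p)⁻¹}) ≤
      Algebra.adjoin F
        ((algebraMap (PolyV F k) (RatV F k) ''
            {r : PolyV F k | ∀ h ∈ G,
              matSubV ((ρ h : GL (Fin k) F) : Matrix (Fin k) (Fin k) F) r = r}) ∪
          {(algebraMap (PolyV F k) (RatV F k) p)⁻¹}))
    (hint : ∀ x ∈ Algebra.adjoin F
        ((algebraMap (PolyV F k) (RatV F k) ''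
            {r : PolyV F k | ∀ h ∈ G,
              matSubV ((ρ h : GL (Fin k) F) : Matrix (Fin k) (Fin k) F) r = r}) ∪
          {(algebraMap (PolyV F k) (RatV F k) p)⁻¹}),
      IsIntegral
        ↥(Algebra.adjoin F (Set.range f ∪ {(algebraMap (PolyV F k) (RatV F k) p)⁻¹})) x) :
    Algebra.adjoin F
        ((algebraMap (PolyV F k) (RatV F k) ''
            {r : PolyV F k | ∀ h ∈ G,
              matSubV ((ρ h : GL (Fin k) F) : Matrix (Fin k) (Fin k) F) r = r}) ∪
          {(algebraMap (PolyV F k) (RatV F k) p)⁻¹}) =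
      Algebra.adjoin F (Set.range f ∪ {(algebraMap (PolyV F k) (RatV F k) p)⁻¹}) := by
  exact localized_criterion_integral_general ρ G f hgen hpadj
    (by rwa [Ne, FaithfulSMul.algebraMap_eq_zero_iff]) hsub hint

end
end
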